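/- Let Ω be a nonempty closed convex cone of H₂ and K(u) := φ₀(u) + Ω for a map φ₀ : Ω → Ω. Assume (H₁)–(H₄) and (H₅') hold and L < 1, where L := (2·l_K²/η_G²)(l_G·√(4l_G²+2η_G²) + 2l_G² + η_G²), and let (x,u) ∈ C(I,H₁) × C(I,Ω) be the unique solution of the nonlocal fractional differential quasi-complementarity problem. Let ε > 0 and suppose z ∈ C(I,H₁), υ ∈ C(I,Ω) and h ∈ C(I,H₁) satisfy: ‖h(s)‖ ≤ ε for all s ∈ I; z(s) = z(0) + (1/Γ(q))·∫₀^s (s−ζ)^{q−1}[f(ζ,z(ζ)) + g(ζ,z(ζ),υ(ζ)) + h(ζ)] dζ for all s ∈ I; for all s ∈ I, υ(s) ∈ φ₀(υ(s)) + Ω, G(s,z(s),υ(s)) ∈ Ω* and ⟨G(s,z(s),υ(s)), υ(s) − φ₀(υ(s))⟩ = 0; and z(0) = x₀ + ψ(x). Then ‖z(s) − x(s)‖ ≤ (T^q/Γ(q+1))·ε·E_q((l_f + ξ)·s^q) for all s ∈ I, where ξ := l_g(1+√(κ/(1−L))) and Ω* := {w ∈ H₂ : ⟨w,v⟩ ≥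 0 for all v ∈ Ω}. -/

import Mathlib

/-!
Writing complementarity as a variational inequality on `K(u) = φ₀(u) + Ω`, the controls satisfy
`‖υ(s) - u(s)‖ ≤ √(κ / (1 - L)) ‖z(s) - x(s)‖` at each time `s`
(`complementarity_stability`). To see this, project `u - ρ G(s, x, u)` onto `K(υ)`: strong
pseudomonotonicity compares this projection with `υ`, the Lipschitz dependence of the projections
compares it with `u`, and letting `ρ → ∞` gives
`‖υ - u‖ ≤ (l_G / η_G) ‖z - x‖ + (1 + l_G / η_G) l_K ‖υ - u‖` (`qvi_raw`). A weighted Young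
inequality turns this into the stated constants (`le_sqrt_kconst`).

Since `z(0) = x₀ + ψ(x)`, the nonlocal terms cancel in `z - x`. The Lipschitz bounds on `f` and `g`
then give a fractional integral inequality for `‖z - x‖` with rate `l_f + ξ` and forcing
`ε s^q / Γ(q+1) ≤ ε T^q / Γ(q+1)`, and the fractional Gronwall inequality (`frac_gronwall`) gives
the bound. It is proved by iterating the integral inequality, using the Beta integral for the
powers of `s^q` (`integral_kernel_pow`) and the convergence of the Mittag-Leffler series (`summable_mlE`).
-/

open scoped RealInnerProductSpace
open Set

/-- Metric projection onto a set `C` of a real Hilbert space, characterized by the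
variational inequality `⟪w - x, v - w⟫ ≥ 0` for all `v ∈ C`. -/
noncomputable def proj {H : Type*} [NormedAddCommGroup H] [InnerProductSpace ℝ H]
    (C : Set H) (x : H) : H :=
  letI : Nonempty H := ⟨0⟩
  Classical.epsilon fun w => w ∈ C ∧ ∀ v ∈ C, 0 ≤ ⟪w - x, v - w⟫

/-- The constant `L = (2 l_K²/η_G²)(l_G √(4l_G²+2η_G²) + 2l_G² + η_G²)`. -/
noncomputable def Lconst (lK lG ηG : ℝ) : ℝ :=
  2 * lK ^ 2 / ηG ^ 2 * (lG * Real.sqrt (4 * lG ^ 2 + 2 * ηG ^ 2) + 2 * lG ^ 2 + ηG ^ 2)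

/-- The constant `κ = 2 l_G (√(l_G²+η_G²/2)+l_G)² / (η_G² √(l_G²+η_G²/2))`. -/
noncomputable def kconst (lG ηG : ℝ) : ℝ :=
  2 * lG * (Real.sqrt (lG ^ 2 + ηG ^ 2 / 2) + lG) ^ 2 /
    (ηG ^ 2 * Real.sqrt (lG ^ 2 + ηG ^ 2 / 2))

/-- The constant `ξ = l_g (1 + √(κ/(1-L)))`. -/
noncomputable def xiconst (lg lK lG ηG : ℝ) : ℝ :=
  lg * (1 + Real.sqrt (kconst lG ηG / (1 - Lconst lK lG ηG)))

/-- The Mittag-Leffler function `E_q(t) = ∑_{n=0}^∞ tⁿ/Γ(nq+1)`. -/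
noncomputable def mlE (q t : ℝ) : ℝ := ∑' n : ℕ, t ^ n / Real.Gamma (n * q + 1)

/-- `(x, u)` is a solution of the nonlocal fractional differential
quasi-complementarity problem (NFDQCP), in the integrated sense. -/
def IsNFDQCPSol {H₁ H₂ : Type*} [NormedAddCommGroup H₁] [InnerProductSpace ℝ H₁]
    [NormedAddCommGroup H₂] [InnerProductSpace ℝ H₂]
    (T q : ℝ) (x₀ : H₁) (ψ : (ℝ → H₁) → H₁) (f : ℝ → H₁ → H₁)
    (g : ℝ → H₁ → H₂ → H₁) (G : ℝ → H₁ → H₂ → H₂) (Ω : Set H₂) (φ₀ : H₂ → H₂)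
    (x : ℝ → H₁) (u : ℝ → H₂) : Prop :=
  ContinuousOn x (Icc 0 T) ∧ ContinuousOn u (Icc 0 T) ∧
  (∀ s ∈ Icc (0:ℝ) T, u s ∈ Ω) ∧
  (∀ s ∈ Icc (0:ℝ) T,
    x s = x₀ + ψ x + (Real.Gamma q)⁻¹ •
      ∫ ζ in (0:ℝ)..s, ((s - ζ) ^ (q - 1)) • (f ζ (x ζ) + g ζ (x ζ) (u ζ))) ∧
  (∀ s ∈ Icc (0:ℝ) T,
    u s ∈ (fun w => φ₀ (u s) + w) '' Ω ∧
    (∀ v ∈ Ω, 0 ≤ ⟪G s (x s) (u s), v⟫) ∧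
    ⟪G s (x s) (u s), u s - φ₀ (u s)⟫ = 0)

/-! ### The quasi-variational inequality -/

theorem proj_spec {H : Type*} [NormedAddCommGroup H] [InnerProductSpace ℝ H] [CompleteSpace H]
    {C : Set H} (hne : C.Nonempty) (hcl : IsClosed C) (hcv : Convex ℝ C) (x : H) :
    proj C x ∈ C ∧ ∀ v ∈ C, 0 ≤ ⟪proj C x - x, v - proj C x⟫ := by
  have hex : ∃ w, w ∈ C ∧ ∀ v ∈ C, 0 ≤ ⟪w - x, v - w⟫ := by
    obtain ⟨w, hw, hmin⟩ := exists_norm_eq_iInf_of_complete_convex hne hcl.isComplete hcv x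
    refine ⟨w, hw, fun v hv => ?_⟩
    have h1 := (norm_eq_iInf_iff_real_inner_le_zero hcv hw).1 hmin v hv
    rw [← neg_sub x w, inner_neg_left]
    linarith
  exact Classical.epsilon_spec hex

theorem proj_eq_of_vi {H : Type*} [NormedAddCommGroup H] [InnerProductSpace ℝ H] [CompleteSpace H]
    {C : Set H} (hcl : IsClosed C) (hcv : Convex ℝ C) {x w : H} (hw : w ∈ C)
    (hvi : ∀ v ∈ C, 0 ≤ ⟪w - x, v - w⟫) : proj C x = w := by
  obtain ⟨hp, hpv⟩ := proj_spec ⟨w, hw⟩ hcl hcv x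
  have h1 := hpv w hw
  have h2 := hvi _ hp
  have h3 : ⟪proj C x - x, w - proj C x⟫ + ⟪w - x, proj C x - w⟫
      = -⟪proj C x - w, proj C x - w⟫ := by
    simp only [inner_sub_left, inner_sub_right]
    ring
  have h4 : ⟪proj C x - w, proj C x - w⟫ ≤ 0 := by linarith
  rw [real_inner_self_eq_norm_sq] at h4
  exact sub_eq_zero.1 (norm_eq_zero.1 (pow_eq_zero_iff two_ne_zero |>.1
    (le_antisymm h4 (sq_nonneg _))))

/-- Stability of the quasi-variational inequality before optimizing constants. With `w` the
projection of `u - ρ F` onto `C₂`, strong pseudomonotonicity controls `‖w - υ‖`, the hypothesis on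
projections controls `‖w - u‖`, and the term carrying `1 / ρ` disappears as `ρ → ∞`.
Here `F` is the value of the operator at the solution `u` of the inequality on `C₁`, and `F'` is
the operator whose inequality on `C₂` is solved by `υ`. -/
theorem qvi_raw {H : Type*} [NormedAddCommGroup H] [InnerProductSpace ℝ H] [CompleteSpace H]
    {C₁ C₂ : Set H} (hcl₁ : IsClosed C₁) (hcv₁ : Convex ℝ C₁)
    (hcl₂ : IsClosed C₂) (hcv₂ : Convex ℝ C₂)
    {F : H} {F' : H → H} {u υ : H} (hu : u ∈ C₁) (hυ : υ ∈ C₂)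
    (hviu : ∀ v ∈ C₁, 0 ≤ ⟪F, v - u⟫) (hviυ : ∀ v ∈ C₂, 0 ≤ ⟪F' υ, v - υ⟫)
    {η l X d : ℝ} (hη : 0 < η) (hl : 0 < l)
    (hpm : ∀ v ∈ C₂, 0 ≤ ⟪F' υ, v - υ⟫ → η * ‖v - υ‖ ^ 2 ≤ ⟪F' v, v - υ⟫)
    (hLip : ∀ v ∈ C₂, ‖F' v - F‖ ≤ l * (X + ‖v - u‖))
    (hd : ∀ ϖ, ‖proj C₂ ϖ - proj C₁ ϖ‖ ≤ d) :
    ‖υ - u‖ ≤ l / η * X + (1 + l / η) * d := by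
  refine le_of_forall_pos_le_add fun δ hδ => ?_
  have hd0 : 0 ≤ d := (norm_nonneg _).trans (hd 0)
  -- `δ₁` plays the role of `1 / ρ`
  set δ₁ : ℝ := δ * η / (d + 1) with hδ₁
  have hδ₁p : 0 < δ₁ := by positivity
  set w := proj C₂ (u - δ₁⁻¹ • F) with hwdef
  obtain ⟨hwC, hwv⟩ := proj_spec ⟨υ, hυ⟩ hcl₂ hcv₂ (u - δ₁⁻¹ • F)
  rw [← hwdef] at hwC hwv
  have hpu : proj C₁ (u - δ₁⁻¹ • F) = u := by
    refine proj_eq_of_vi hcl₁ hcv₁ hu fun v hv => ?_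
    rw [sub_sub_cancel, real_inner_smul_left]
    exact mul_nonneg (by positivity) (hviu v hv)
  have hwu : ‖w - u‖ ≤ d := by
    have := hd (u - δ₁⁻¹ • F)
    rwa [hpu] at this
  have h1 := hpm w hwC (hviυ w hwC)
  have h2 := hwv υ hυ
  have h3 : ⟪F, w - υ⟫ ≤ δ₁ * (‖w - u‖ * ‖w - υ‖) := by
    have e1 : ⟪w - (u - δ₁⁻¹ • F), υ - w⟫ = -⟪w - u, w - υ⟫ - δ₁⁻¹ * ⟪F, w - υ⟫ := by
      rw [← neg_sub w υ, inner_neg_right, show w - (u - δ₁⁻¹ • F) = (w - u) + δ₁⁻¹ • F by abel,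
        inner_add_left, real_inner_smul_left]
      ring
    have e2 : -⟪w - u, w - υ⟫ ≤ ‖w - u‖ * ‖w - υ‖ :=
      (neg_le_abs _).trans (abs_real_inner_le_norm _ _)
    have e3 : δ₁⁻¹ * ⟪F, w - υ⟫ ≤ ‖w - u‖ * ‖w - υ‖ := by linarith
    exact (inv_mul_le_iff₀ hδ₁p).1 e3
  have h4 : ⟪F' w - F, w - υ⟫ ≤ l * (X + ‖w - u‖) * ‖w - υ‖ :=
    (real_inner_le_norm _ _).trans
      (mul_le_mul_of_nonneg_right (hLip w hwC) (norm_nonneg _))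
  have hX : 0 ≤ X + ‖w - u‖ := by
    have := (norm_nonneg _).trans (hLip w hwC)
    exact nonneg_of_mul_nonneg_right this hl
  rw [inner_sub_left] at h4
  have h5 : η * ‖w - υ‖ ≤ l * (X + ‖w - u‖) + δ₁ * ‖w - u‖ := by
    rcases (norm_nonneg (w - υ)).eq_or_lt with h0 | h0
    · rw [← h0]
      have := mul_nonneg hl.le hX
      have := mul_nonneg hδ₁p.le (norm_nonneg (w - u))
      linarith
    · refine le_of_mul_le_mul_right ?_ h0
      nlinarith
  have h6 : ‖w - υ‖ ≤ l / η * (X + d) + δ := by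
    have e1 : l * (X + ‖w - u‖) ≤ l * (X + d) := by gcongr
    have e2 : δ₁ * ‖w - u‖ ≤ δ * η := by
      calc δ₁ * ‖w - u‖ ≤ δ₁ * (d + 1) := by gcongr; linarith
        _ = δ * η := by rw [hδ₁]; field_simp
    rw [show l / η * (X + d) + δ = (l * (X + d) + δ * η) / η by field_simp, le_div_iff₀ hη]
    linarith
  have h7 : ‖υ - u‖ ≤ ‖w - υ‖ + ‖w - u‖ := by
    rw [norm_sub_rev w υ]
    exact norm_sub_le_norm_sub_add_norm_sub υ w u
  calc ‖υ - u‖ ≤ _ := h7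
    _ ≤ l / η * (X + d) + δ + d := add_le_add h6 hwu
    _ = _ := by ring

/-- Passage from the raw estimate to the constants `κ` and `L`. With `a = √(l² + η² / 2)` one has
`η² = 2 (a - l) (a + l)`, `κ = 2 l (a + l)² / (η² a)` and `L = 4 lK² a (a + l) / η²`; the estimate
follows from `(α + β)² ≤ (1 + N) α² + (1 + 1 / N) β²` with `1 + N = 2 (a + l)² / (a l)`, the value
for which the first coefficient is exactly `κ`. -/
theorem le_sqrt_kconst {l η lK D X : ℝ} (hl : 0 < l) (hη : 0 < η)
    (hX : 0 ≤ X) (hD : 0 ≤ D) (hL : Lconst lK l η < 1)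
    (hraw : D ≤ l / η * X + (1 + l / η) * (lK * D)) :
    D ≤ Real.sqrt (kconst l η / (1 - Lconst lK l η)) * X := by
  set a := Real.sqrt (l ^ 2 + η ^ 2 / 2) with ha
  have ha2 : a ^ 2 = l ^ 2 + η ^ 2 / 2 := Real.sq_sqrt (by positivity)
  have hap : 0 < a := Real.sqrt_pos.2 (by positivity)
  have hsq : Real.sqrt (4 * l ^ 2 + 2 * η ^ 2) = 2 * a := by
    rw [show 4 * l ^ 2 + 2 * η ^ 2 = (2 * a) ^ 2 by rw [mul_pow, ha2]; ring]
    exact Real.sqrt_sq (by positivity)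
  have hLe : Lconst lK l η = lK ^ 2 * (4 * a * (a + l) / η ^ 2) := by
    have hη2 : η ^ 2 = 2 * a ^ 2 - 2 * l ^ 2 := by linarith
    rw [Lconst, hsq, show l * (2 * a) + 2 * l ^ 2 + η ^ 2 = 2 * a * (a + l) by rw [hη2]; ring]
    ring
  have hke : kconst l η = (l / η) ^ 2 * (2 * (a + l) ^ 2 / (a * l)) := by
    rw [kconst, ← ha]
    field_simp
  set N := 2 * (a + l) ^ 2 / (a * l) - 1 with hN
  have hNe : N = (2 * a ^ 2 + 3 * a * l + 2 * l ^ 2) / (a * l) := by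
    rw [hN]
    field_simp
    ring
  have hNp : 0 < N := by rw [hNe]; positivity
  have hcoef : (1 + l / η) ^ 2 * (1 + 1 / N) ≤ 4 * a * (a + l) / η ^ 2 := by
    have e1 : 1 + 1 / N = 2 * (a + l) ^ 2 / (2 * a ^ 2 + 3 * a * l + 2 * l ^ 2) := by
      rw [hNe]
      field_simp
      ring
    have e2 : (1 + l / η) ^ 2 = (η + l) ^ 2 / η ^ 2 := by field_simp
    rw [e1, e2, div_mul_div_comm, div_le_div_iff₀ (by positivity) (by positivity)]
    have e3 : (η + l) ^ 2 ≤ 4 * a ^ 2 - 2 * l ^ 2 := by nlinarith [sq_nonneg (η - l)]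
    have e4 : (η + l) ^ 2 * (a + l) ≤ 2 * a * (2 * a ^ 2 + 3 * a * l + 2 * l ^ 2) := by
      have e5 := mul_le_mul_of_nonneg_right e3 (by positivity : 0 ≤ a + l)
      have e6 : 0 ≤ 2 * a ^ 2 * l + 6 * (a * l ^ 2) + 2 * l ^ 3 := by positivity
      nlinarith
    calc (η + l) ^ 2 * (2 * (a + l) ^ 2) * η ^ 2
        = (η + l) ^ 2 * (a + l) * (2 * (a + l) * η ^ 2) := by ring
      _ ≤ 2 * a * (2 * a ^ 2 + 3 * a * l + 2 * l ^ 2) * (2 * (a + l) * η ^ 2) := by gcongr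
      _ = _ := by ring
  have hyoung : ∀ α β : ℝ, (α + β) ^ 2 ≤ (1 + N) * α ^ 2 + (1 + 1 / N) * β ^ 2 := by
    intro α β
    have : (1 + N) * α ^ 2 + (1 + 1 / N) * β ^ 2 - (α + β) ^ 2 = (N * α - β) ^ 2 / N := by
      field_simp
      ring
    have := div_nonneg (sq_nonneg (N * α - β)) hNp.le
    linarith
  have hmain : (1 - Lconst lK l η) * D ^ 2 ≤ kconst l η * X ^ 2 := by
    have e1 : D ^ 2 ≤ (l / η * X + (1 + l / η) * (lK * D)) ^ 2 :=
      pow_le_pow_left₀ hD hraw 2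
    have e2 := e1.trans (hyoung _ _)
    have e3 := mul_le_mul_of_nonneg_right hcoef (sq_nonneg (lK * D))
    rw [hke, hLe]
    have e4 : 1 + N = 2 * (a + l) ^ 2 / (a * l) := by rw [hN]; ring
    rw [e4] at e2
    linarith
  have h1L : 0 < 1 - Lconst lK l η := by linarith
  calc D = Real.sqrt (D ^ 2) := (Real.sqrt_sq hD).symm
    _ ≤ Real.sqrt (kconst l η / (1 - Lconst lK l η) * X ^ 2) := by
        apply Real.sqrt_le_sqrt
        rw [div_mul_eq_mul_div, le_div_iff₀ h1L]
        linarith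
    _ = Real.sqrt (kconst l η / (1 - Lconst lK l η)) * X := by
        rw [Real.sqrt_mul' _ (sq_nonneg X), Real.sqrt_sq hX]

/-! ### Fractional Gronwall inequality -/

theorem intervalIntegrable_kernel {q : ℝ} (hq : 0 < q) (s : ℝ) :
    IntervalIntegrable (fun ζ : ℝ => (s - ζ) ^ (q - 1)) MeasureTheory.volume 0 s := by
  have h := (intervalIntegral.intervalIntegrable_rpow' (a := s) (b := 0)
    (by linarith : -1 < q - 1)).comp_sub_left s
  simpa using h

/-- The Riemann–Liouville integral of the `n`-th power of `ζ ^ q`, a scaled Beta integral. -/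
theorem integral_kernel_pow {q : ℝ} (hq : 0 < q) {s : ℝ} (hs : 0 ≤ s) (n : ℕ) :
    ∫ ζ in (0:ℝ)..s, (s - ζ) ^ (q - 1) * (ζ ^ q) ^ n =
      Real.Gamma q * Real.Gamma (n * q + 1) / Real.Gamma ((n + 1 : ℕ) * q + 1)
        * (s ^ q) ^ (n + 1) := by
  rcases hs.eq_or_lt with rfl | hs
  · simp [Real.zero_rpow hq.ne']
  have hp : 0 < (n:ℝ) * q + 1 := by positivity
  have h1 := Complex.betaIntegral_scaled (((n:ℝ) * q + 1 : ℝ) : ℂ) (q : ℂ) hs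
  rw [Complex.betaIntegral_eq_Gamma_mul_div _ _ (by simpa using hp) (by simpa using hq)] at h1
  apply Complex.ofReal_injective
  rw [← intervalIntegral.integral_ofReal]
  have h2 : ∫ ζ in (0:ℝ)..s, (((s - ζ) ^ (q - 1) * (ζ ^ q) ^ n : ℝ) : ℂ) =
      ∫ ζ in (0:ℝ)..s, (ζ : ℂ) ^ ((((n:ℝ) * q + 1 : ℝ) : ℂ) - 1) *
        ((s : ℂ) - ζ) ^ ((q : ℂ) - 1) := by
    refine intervalIntegral.integral_congr fun ζ hζ => ?_
    rw [uIcc_of_le hs.le] at hζ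
    have e1 : (ζ ^ q) ^ n = ζ ^ ((n:ℝ) * q + 1 - 1) := by
      rw [← Real.rpow_natCast, ← Real.rpow_mul hζ.1]
      ring_nf
    rw [e1, mul_comm, Complex.ofReal_mul, Complex.ofReal_cpow hζ.1,
      Complex.ofReal_cpow (sub_nonneg.2 hζ.2)]
    push_cast
    rfl
  rw [h2, h1]
  have e3 : (s ^ q) ^ (n + 1) = s ^ ((n:ℝ) * q + 1 + q - 1) := by
    rw [← Real.rpow_natCast, ← Real.rpow_mul hs.le]
    push_cast
    ring_nf
  rw [e3, ← Complex.ofReal_add, Complex.Gamma_ofReal, Complex.Gamma_ofReal, Complex.Gamma_ofReal,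
    show ((n + 1 : ℕ) : ℝ) * q + 1 = (n:ℝ) * q + 1 + q by push_cast; ring]
  rw [Complex.ofReal_mul, Complex.ofReal_cpow hs.le]
  push_cast
  ring

/-- The Mittag-Leffler series converges: logarithmic convexity of `Γ` gives
`Γ(y) / Γ(y + q) ≤ (y + q)^(1-q) / y`, so the ratios of consecutive terms tend to zero. -/
theorem summable_mlE {q : ℝ} (hq : 0 < q) (hq1 : q ≤ 1) {t : ℝ} (ht : 0 ≤ t) :
    Summable fun n : ℕ => t ^ n / Real.Gamma (n * q + 1) := by
  rcases ht.eq_or_lt with rfl | ht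
  · refine summable_of_ne_finset_zero (s := {0}) fun n hn => ?_
    rw [zero_pow (by simpa using hn), zero_div]
  have hG : ∀ n : ℕ, 0 < Real.Gamma (n * q + 1) := fun n => Real.Gamma_pos_of_pos (by positivity)
  have hratio : ∀ y : ℝ, 0 < y →
      Real.Gamma y / Real.Gamma (y + q) ≤ (y + q) ^ (1 - q) / y := by
    intro y hy
    have hyq : 0 < y + q := by linarith
    have hGy := Real.Gamma_pos_of_pos hyq
    rw [div_le_div_iff₀ hGy hy]
    have h1 : Real.Gamma (y + 1) ≤ (y + q) ^ (1 - q) * Real.Gamma (y + q) := by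
      rcases hq1.eq_or_lt with rfl | hq1
      · simp
      have := Real.Gamma_mul_add_mul_le_rpow_Gamma_mul_rpow_Gamma hyq
        (by linarith : 0 < y + q + 1) hq (by linarith : 0 < 1 - q) (by ring)
      rw [show q * (y + q) + (1 - q) * (y + q + 1) = y + 1 by ring,
        Real.Gamma_add_one hyq.ne', Real.mul_rpow hyq.le hGy.le] at this
      calc Real.Gamma (y + 1) ≤ _ := this
        _ = (y + q) ^ (1 - q) * (Real.Gamma (y + q) ^ q * Real.Gamma (y + q) ^ (1 - q)) := by ring
        _ = _ := by rw [← Real.rpow_add hGy]; simp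
    rw [Real.Gamma_add_one hy.ne'] at h1
    linarith
  refine summable_of_ratio_test_tendsto_lt_one (l := 0) one_pos
    (Filter.Eventually.of_forall fun n => (div_pos (pow_pos ht n) (hG n)).ne') ?_
  have hlim : Filter.Tendsto (fun n : ℕ => t * (2 * ((n:ℝ) * q + 1) ^ (-q)))
      Filter.atTop (nhds 0) := by
    have h1 : Filter.Tendsto (fun n : ℕ => (n:ℝ) * q + 1) Filter.atTop Filter.atTop :=
      Filter.tendsto_atTop_add_const_right _ _
        (tendsto_natCast_atTop_atTop.atTop_mul_const hq)
    have h2 := ((tendsto_rpow_neg_atTop hq).comp h1).const_mul 2 |>.const_mul t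
    simpa using h2
  refine squeeze_zero (fun n => by positivity) (fun n => ?_) hlim
  set y : ℝ := (n:ℝ) * q + 1 with hy
  have hy1 : 1 ≤ y := by rw [hy]; linarith [(by positivity : 0 ≤ (n:ℝ) * q)]
  have hy0 : 0 < y := by linarith
  have hyq : ((n + 1 : ℕ) : ℝ) * q + 1 = y + q := by rw [hy]; push_cast; ring
  have hGq : 0 < Real.Gamma (y + q) := Real.Gamma_pos_of_pos (by linarith)
  have hGy : 0 < Real.Gamma y := Real.Gamma_pos_of_pos hy0
  rw [hyq, Real.norm_of_nonneg (by positivity), Real.norm_of_nonneg (by positivity)]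
  have e1 : t ^ (n + 1) / Real.Gamma (y + q) / (t ^ n / Real.Gamma y)
      = t * (Real.Gamma y / Real.Gamma (y + q)) := by
    field_simp
    ring
  rw [e1]
  refine mul_le_mul_of_nonneg_left ((hratio y hy0).trans ?_) ht.le
  have e2 : (y + q) ^ (1 - q) ≤ 2 * y ^ (1 - q) := by
    calc (y + q) ^ (1 - q) ≤ (2 * y) ^ (1 - q) :=
          Real.rpow_le_rpow (by linarith) (by linarith) (by linarith)
      _ = 2 ^ (1 - q) * y ^ (1 - q) := Real.mul_rpow (by norm_num) hy0.le
      _ ≤ 2 * y ^ (1 - q) := by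
          gcongr
          calc (2:ℝ) ^ (1 - q) ≤ 2 ^ (1:ℝ) :=
                Real.rpow_le_rpow_of_exponent_le (by norm_num) (by linarith)
            _ = 2 := Real.rpow_one 2
  rw [div_le_iff₀ hy0]
  calc (y + q) ^ (1 - q) ≤ 2 * y ^ (1 - q) := e2
    _ = 2 * (y ^ (-q) * y ^ (1:ℝ)) := by rw [← Real.rpow_add hy0]; ring_nf
    _ = 2 * y ^ (-q) * y := by rw [Real.rpow_one]; ring

/-- Fractional Gronwall inequality with constant forcing `A`. Iterating the inequality `n` times
bounds `r` by the `n`-th partial sum of `A * mlE` plus a multiple of the `n`-th term, and these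
terms tend to zero. -/
theorem frac_gronwall {T q A Λ : ℝ} (hq : 0 < q) (hq1 : q ≤ 1) (hΛ : 0 ≤ Λ)
    {r : ℝ → ℝ} (hr : ContinuousOn r (Icc 0 T))
    (hle : ∀ s ∈ Icc (0:ℝ) T,
      r s ≤ A + (Real.Gamma q)⁻¹ * ∫ ζ in (0:ℝ)..s, (s - ζ) ^ (q - 1) * (Λ * r ζ)) :
    ∀ s ∈ Icc (0:ℝ) T, r s ≤ A * mlE q (Λ * s ^ q) := by
  obtain ⟨M, hM⟩ := isCompact_Icc.exists_bound_of_continuousOn hr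
  have hGq : 0 < Real.Gamma q := Real.Gamma_pos_of_pos hq
  have key : ∀ n : ℕ, ∀ s ∈ Icc (0:ℝ) T,
      r s ≤ A * ∑ k ∈ Finset.range n, (Λ * s ^ q) ^ k / Real.Gamma (k * q + 1)
        + M * ((Λ * s ^ q) ^ n / Real.Gamma (n * q + 1)) := by
    intro n
    induction n with
    | zero =>
      intro s hs
      simpa using (le_abs_self _).trans (hM s hs)
    | succ n ih =>
      intro s hs
      have hsub : Icc 0 s ⊆ Icc 0 T := Icc_subset_Icc_right hs.2
      -- `c k * τ k` is the kernel times `Λ` times the `k`-th term; its integral, divided by `Γ(q)`,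
      -- is the `(k + 1)`-st term
      set τ : ℕ → ℝ → ℝ := fun k ζ => (s - ζ) ^ (q - 1) * (ζ ^ q) ^ k with hτ
      have hτi : ∀ k, IntervalIntegrable (τ k) MeasureTheory.volume 0 s := fun k =>
        (intervalIntegrable_kernel hq s).mul_continuousOn
          ((continuous_id.rpow_const fun _ => Or.inr hq.le).pow k).continuousOn
      set c : ℕ → ℝ := fun k => Λ ^ (k + 1) / Real.Gamma (k * q + 1) with hc
      have hτint : ∀ k, (Real.Gamma q)⁻¹ * (c k * ∫ ζ in (0:ℝ)..s, τ k ζ)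
          = (Λ * s ^ q) ^ (k + 1) / Real.Gamma ((k + 1 : ℕ) * q + 1) := by
        intro k
        have h1 : 0 < Real.Gamma (k * q + 1) := Real.Gamma_pos_of_pos (by positivity)
        rw [hτ, hc]
        simp only
        rw [integral_kernel_pow hq hs.1 k, mul_pow]
        field_simp
      have hri : IntervalIntegrable (fun ζ => (s - ζ) ^ (q - 1) * (Λ * r ζ))
          MeasureTheory.volume 0 s :=
        (intervalIntegrable_kernel hq s).mul_continuousOn (by
          rw [uIcc_of_le hs.1]
          exact continuousOn_const.mul (hr.mono hsub))
      have hsi : IntervalIntegrable (fun ζ => ∑ k ∈ Finset.range n, c k * τ k ζ)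
          MeasureTheory.volume 0 s := by
        have := IntervalIntegrable.sum (Finset.range n)
          (f := fun k ζ => c k * τ k ζ) (fun k _ => (hτi k).const_mul (c k))
        simpa [Finset.sum_fn] using this
      have hbd : ∫ ζ in (0:ℝ)..s, (s - ζ) ^ (q - 1) * (Λ * r ζ) ≤
          ∫ ζ in (0:ℝ)..s, (A * (∑ k ∈ Finset.range n, c k * τ k ζ) + M * (c n * τ n ζ)) := by
        refine intervalIntegral.integral_mono_on hs.1 hri
          ((hsi.const_mul A).add (((hτi n).const_mul _).const_mul M)) fun ζ hζ => ?_
        have h0 : 0 ≤ (s - ζ) ^ (q - 1) := Real.rpow_nonneg (sub_nonneg.2 hζ.2) _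
        calc (s - ζ) ^ (q - 1) * (Λ * r ζ)
            ≤ (s - ζ) ^ (q - 1) * (Λ *
              (A * ∑ k ∈ Finset.range n, (Λ * ζ ^ q) ^ k / Real.Gamma (k * q + 1)
                + M * ((Λ * ζ ^ q) ^ n / Real.Gamma (n * q + 1)))) := by
              gcongr
              exact ih ζ (hsub hζ)
          _ = _ := by
              have e : ∀ k : ℕ, (s - ζ) ^ (q - 1) *
                  (Λ * ((Λ * ζ ^ q) ^ k / Real.Gamma (k * q + 1))) = c k * τ k ζ := by
                intro k
                simp only [hc, hτ, mul_pow]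
                ring
              rw [← e n, Finset.sum_congr rfl fun k _ => (e k).symm, ← Finset.mul_sum,
                ← Finset.mul_sum]
              ring
      rw [intervalIntegral.integral_add (hsi.const_mul A) (((hτi n).const_mul _).const_mul M),
        intervalIntegral.integral_const_mul, intervalIntegral.integral_const_mul,
        intervalIntegral.integral_const_mul,
        intervalIntegral.integral_finsetSum (fun k _ => (hτi k).const_mul (c k))] at hbd
      simp only [intervalIntegral.integral_const_mul] at hbd
      have hbd2 := mul_le_mul_of_nonneg_left hbd (inv_nonneg.2 hGq.le)
      have e1 : (Real.Gamma q)⁻¹ * (A * ∑ k ∈ Finset.range n, c k * ∫ ζ in (0:ℝ)..s, τ k ζ)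
          = A * ∑ k ∈ Finset.range n,
            (Λ * s ^ q) ^ (k + 1) / Real.Gamma ((k + 1 : ℕ) * q + 1) := by
        rw [mul_left_comm, Finset.mul_sum, Finset.sum_congr rfl fun k _ => hτint k]
      rw [mul_add, e1, mul_left_comm, hτint n] at hbd2
      rw [Finset.sum_range_succ']
      have e0 : (Λ * s ^ q) ^ 0 / Real.Gamma ((0 : ℕ) * q + 1) = 1 := by simp
      rw [e0]
      linarith [hle s hs]
  intro s hs
  have hsum := summable_mlE hq hq1 (mul_nonneg hΛ (Real.rpow_nonneg hs.1 q))
  have hlim := (hsum.hasSum.tendsto_sum_nat.const_mul A).add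
    (hsum.tendsto_atTop_zero.const_mul M)
  rw [mul_zero, add_zero] at hlim
  exact ge_of_tendsto' hlim fun n => key n s hs

/-- Estimate at a fixed time: the complementarity problem is a quasi-variational
inequality, so its solutions depend on the state in a Lipschitz way. -/
theorem complementarity_stability
    {H₁ H₂ : Type*} [NormedAddCommGroup H₁]
    [NormedAddCommGroup H₂] [InnerProductSpace ℝ H₂] [CompleteSpace H₂]
    {Ω : Set H₂} (hΩcl : IsClosed Ω) (hΩcv : Convex ℝ Ω)
    (hΩcone : ∀ w ∈ Ω, ∀ c : ℝ, 0 ≤ c → c • w ∈ Ω)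
    {φ₀ : H₂ → H₂} (hφ₀ : ∀ w ∈ Ω, φ₀ w ∈ Ω)
    {K : H₂ → Set H₂} (hKdef : ∀ u : H₂, K u = (fun w => φ₀ u + w) '' Ω)
    {G : H₁ → H₂ → H₂} {lG ηG : ℝ} (hlG : 0 < lG) (hηG : 0 < ηG)
    (hGLip : ∀ (x₁ x₂ : H₁), ∀ u₁ ∈ Ω, ∀ u₂ ∈ Ω,
      ‖G x₂ u₂ - G x₁ u₁‖ ≤ lG * (‖x₂ - x₁‖ + ‖u₂ - u₁‖))
    (hGpm : ∀ (x : H₁), ∀ u ∈ Ω, ∀ u₁ ∈ K u, ∀ u₂ ∈ K u,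
      0 ≤ ⟪G x u₂, u₁ - u₂⟫ → ηG * ‖u₁ - u₂‖ ^ 2 ≤ ⟪G x u₁, u₁ - u₂⟫)
    {lK : ℝ}
    (hKproj : ∀ u₁ ∈ Ω, ∀ u₂ ∈ Ω, ∀ ϖ : H₂,
      ‖proj (K u₂) ϖ - proj (K u₁) ϖ‖ ≤ lK * ‖u₂ - u₁‖)
    (hL : Lconst lK lG ηG < 1)
    {x z : H₁} {u υ : H₂} (huΩ : u ∈ Ω) (hυΩ : υ ∈ Ω)
    (hu : u ∈ (fun w => φ₀ u + w) '' Ω ∧ (∀ v ∈ Ω, 0 ≤ ⟪G x u, v⟫) ∧ ⟪G x u, u - φ₀ u⟫ = 0)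
    (hυ : υ ∈ (fun w => φ₀ υ + w) '' Ω ∧ (∀ v ∈ Ω, 0 ≤ ⟪G z υ, v⟫) ∧ ⟪G z υ, υ - φ₀ υ⟫ = 0) :
    ‖υ - u‖ ≤ Real.sqrt (kconst lG ηG / (1 - Lconst lK lG ηG)) * ‖z - x‖ := by
  have hcl : ∀ p, IsClosed (K p) := fun p => by
    rw [hKdef]
    exact (Homeomorph.addLeft (φ₀ p)).isClosedMap _ hΩcl
  have hcv : ∀ p, Convex ℝ (K p) := fun p => by
    rw [hKdef]
    exact hΩcv.translate (φ₀ p)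
  have hvi : ∀ {y : H₁} {p : H₂}, (∀ v ∈ Ω, 0 ≤ ⟪G y p, v⟫) → ⟪G y p, p - φ₀ p⟫ = 0 →
      ∀ v ∈ K p, 0 ≤ ⟪G y p, v - p⟫ := by
    intro y p h1 h2 v hv
    rw [hKdef] at hv
    obtain ⟨w, hw, rfl⟩ := hv
    have h3 := h1 w hw
    rw [show φ₀ p + w - p = w - (p - φ₀ p) by abel, inner_sub_right, h2]
    linarith
  have hKΩ : ∀ p ∈ Ω, K p ⊆ Ω := by
    intro p hp v hv
    rw [hKdef] at hv
    obtain ⟨w, hw, rfl⟩ := hv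
    -- a convex cone is closed under addition: double the midpoint
    have h1 := hΩcone _ (hΩcv (hφ₀ p hp) hw (by norm_num : (0:ℝ) ≤ 1 / 2)
      (by norm_num : (0:ℝ) ≤ 1 / 2) (by norm_num)) 2 (by norm_num)
    rw [← smul_add, smul_smul] at h1
    simpa using h1
  refine le_sqrt_kconst hlG hηG (norm_nonneg _) (norm_nonneg _) hL ?_
  have huK : u ∈ K u := by rw [hKdef]; exact hu.1
  have hυK : υ ∈ K υ := by rw [hKdef]; exact hυ.1
  exact qvi_raw (hcl u) (hcv u) (hcl υ) (hcv υ) (F := G x u) (F' := G z) huK hυK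
    (hvi hu.2.1 hu.2.2) (hvi hυ.2.1 hυ.2.2) hηG hlG
    (fun v hv => hGpm z υ hυΩ v hv υ hυK)
    (fun v hv => hGLip x z u huΩ v (hKΩ υ hυΩ hv)) (hKproj u huΩ υ hυΩ)

/-! ### Stability -/

/-- Corollary 4.1: Mittag-Leffler-Hyers-Ulam stability of the NFDQCP. -/
theorem nfdqcp_mlhu_stability
    {H₁ H₂ : Type*} [NormedAddCommGroup H₁] [InnerProductSpace ℝ H₁] [CompleteSpace H₁]
    [NormedAddCommGroup H₂] [InnerProductSpace ℝ H₂] [CompleteSpace H₂]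
    (T : ℝ) (hT : 0 < T) (q : ℝ) (hq : q ∈ Ioc (0:ℝ) 1) (x₀ : H₁)
    -- Ω is a nonempty closed convex cone
    (Ω : Set H₂) (hΩne : Ω.Nonempty) (hΩcl : IsClosed Ω) (hΩcv : Convex ℝ Ω)
    (hΩcone : ∀ w ∈ Ω, ∀ c : ℝ, 0 ≤ c → c • w ∈ Ω)
    -- K(u) = φ₀(u) + Ω
    (φ₀ : H₂ → H₂) (hφ₀ : ∀ w ∈ Ω, φ₀ w ∈ Ω)
    (K : H₂ → Set H₂) (hKdef : ∀ u : H₂, K u = (fun w => φ₀ u + w) '' Ω)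
    (G : ℝ → H₁ → H₂ → H₂) (lG ηG : ℝ) (hlG : 0 < lG) (hηG : 0 < ηG)
    -- (H₁)
    (hGLip : ∀ s₁ ∈ Icc (0:ℝ) T, ∀ s₂ ∈ Icc (0:ℝ) T, ∀ (x₁ x₂ : H₁), ∀ u₁ ∈ Ω, ∀ u₂ ∈ Ω,
      ‖G s₂ x₂ u₂ - G s₁ x₁ u₁‖ ≤ lG * (|s₂ - s₁| + ‖x₂ - x₁‖ + ‖u₂ - u₁‖))
    (hGpm : ∀ s ∈ Icc (0:ℝ) T, ∀ (x : H₁), ∀ u ∈ Ω, ∀ u₁ ∈ K u, ∀ u₂ ∈ K u,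
      0 ≤ ⟪G s x u₂, u₁ - u₂⟫ → ηG * ‖u₁ - u₂‖ ^ 2 ≤ ⟪G s x u₁, u₁ - u₂⟫)
    -- (H₂)
    (lK : ℝ) (hlK : 0 ≤ lK)
    (hKproj : ∀ u₁ ∈ Ω, ∀ u₂ ∈ Ω, ∀ ϖ : H₂,
      ‖proj (K u₂) ϖ - proj (K u₁) ϖ‖ ≤ lK * ‖u₂ - u₁‖)
    -- (H₃)
    (g : ℝ → H₁ → H₂ → H₁) (lg : ℝ) (hlg : 0 < lg)
    (hgc : ContinuousOn (fun p : ℝ × H₁ × H₂ => g p.1 p.2.1 p.2.2)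
      (Icc (0:ℝ) T ×ˢ (univ : Set (H₁ × H₂))))
    (hgLip : ∀ s ∈ Icc (0:ℝ) T, ∀ (x₁ x₂ : H₁) (u₁ u₂ : H₂),
      ‖g s x₂ u₂ - g s x₁ u₁‖ ≤ lg * (‖x₂ - x₁‖ + ‖u₂ - u₁‖))
    -- (H₄)
    (f : ℝ → H₁ → H₁) (lf : ℝ) (hlf : 0 < lf)
    (hfc : ContinuousOn (fun p : ℝ × H₁ => f p.1 p.2) (Icc (0:ℝ) T ×ˢ (univ : Set H₁)))
    (hfLip : ∀ s ∈ Icc (0:ℝ) T, ∀ x₁ x₂ : H₁, ‖f s x₂ - f s x₁‖ ≤ lf * ‖x₂ - x₁‖)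
    -- (H₅')
    (ψ : (ℝ → H₁) → H₁) (γ lψ : ℝ) (hγ : 0 < γ) (hlψ0 : 0 < lψ) (hlψ1 : lψ < 1)
    (hψLip : ∀ y₁ y₂ : ℝ → H₁, ContinuousOn y₁ (Icc 0 T) → ContinuousOn y₂ (Icc 0 T) →
      ‖ψ y₂ - ψ y₁‖ ≤ lψ * sSup ((fun s => Real.exp (-(γ * s)) * ‖y₂ s - y₁ s‖) '' Icc 0 T))
    (hsmall : lψ + (lf + xiconst lg lK lG ηG) / Real.Gamma q *
      sSup ((fun s => ∫ ζ in (0:ℝ)..s, (s - ζ) ^ (q - 1) * Real.exp (-(γ * (s - ζ)))) ''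
        Icc (0:ℝ) T) < 1)
    -- L < 1
    (hL : Lconst lK lG ηG < 1)
    -- (x, u) is the (unique) solution of the NFDQCP
    (x : ℝ → H₁) (u : ℝ → H₂) (hxu : IsNFDQCPSol T q x₀ ψ f g G Ω φ₀ x u)
    -- (z, υ, h): solution of the perturbed inequality system
    (z : ℝ → H₁) (hz : ContinuousOn z (Icc 0 T))
    (υ : ℝ → H₂) (hυc : ContinuousOn υ (Icc 0 T)) (hυΩ : ∀ s ∈ Icc (0:ℝ) T, υ s ∈ Ω)
    (h : ℝ → H₁) (hhc : ContinuousOn h (Icc 0 T))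
    (hzeq : ∀ s ∈ Icc (0:ℝ) T,
      z s = z 0 + (Real.Gamma q)⁻¹ •
        ∫ ζ in (0:ℝ)..s, ((s - ζ) ^ (q - 1)) • (f ζ (z ζ) + g ζ (z ζ) (υ ζ) + h ζ))
    (hυ : ∀ s ∈ Icc (0:ℝ) T,
      υ s ∈ (fun w => φ₀ (υ s) + w) '' Ω ∧
      (∀ v ∈ Ω, 0 ≤ ⟪G s (z s) (υ s), v⟫) ∧
      ⟪G s (z s) (υ s), υ s - φ₀ (υ s)⟫ = 0)
    (hz0 : z 0 = x₀ + ψ x)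
    (ε : ℝ) (hε : 0 < ε) (hh : ∀ s ∈ Icc (0:ℝ) T, ‖h s‖ ≤ ε) :
    ∀ s ∈ Icc (0:ℝ) T,
      ‖z s - x s‖ ≤ T ^ q / Real.Gamma (q + 1) * ε *
        mlE q ((lf + xiconst lg lK lG ηG) * s ^ q) := by
  obtain ⟨hxc, huc, huΩ, hxeq, hucp⟩ := hxu
  have hq0 : 0 < q := hq.1
  have hGq : 0 < Real.Gamma q := Real.Gamma_pos_of_pos hq0
  set S := Real.sqrt (kconst lG ηG / (1 - Lconst lK lG ηG))
  set Λ := lf + xiconst lg lK lG ηG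
  have hΛe : Λ = lf + lg * (1 + S) := rfl
  have hΛ0 : 0 ≤ Λ := by rw [hΛe]; positivity
  have hdu : ∀ s ∈ Icc (0:ℝ) T, ‖υ s - u s‖ ≤ S * ‖z s - x s‖ := fun s hs =>
    complementarity_stability hΩcl hΩcv hΩcone hφ₀ hKdef hlG hηG
      (fun x₁ x₂ u₁ h₁ u₂ h₂ => by simpa using hGLip s hs s hs x₁ x₂ u₁ h₁ u₂ h₂)
      (hGpm s hs) hKproj hL (huΩ s hs) (hυΩ s hs) (hucp s hs) (hυ s hs)
  have hcont : ∀ {y : ℝ → H₁} {v : ℝ → H₂}, ContinuousOn y (Icc 0 T) →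
      ContinuousOn v (Icc 0 T) →
      ContinuousOn (fun ζ => f ζ (y ζ) + g ζ (y ζ) (v ζ)) (Icc 0 T) := by
    intro y v hy hv
    exact (hfc.comp (continuousOn_id.prodMk hy) fun ζ hζ => ⟨hζ, mem_univ _⟩).add
      (hgc.comp (continuousOn_id.prodMk (hy.prodMk hv)) fun ζ hζ => ⟨hζ, mem_univ _⟩)
  refine frac_gronwall hq0 hq.2 hΛ0 (hz.sub hxc).norm fun s hs => ?_
  have hsub : uIcc 0 s ⊆ Icc 0 T := by
    rw [uIcc_of_le hs.1]
    exact Icc_subset_Icc_right hs.2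
  have hker := intervalIntegrable_kernel hq0 s
  have hiz : IntervalIntegrable (fun ζ => (s - ζ) ^ (q - 1) •
      (f ζ (z ζ) + g ζ (z ζ) (υ ζ) + h ζ)) MeasureTheory.volume 0 s :=
    hker.smul_continuousOn (((hcont hz hυc).add hhc).mono hsub)
  have hix := hker.smul_continuousOn ((hcont hxc huc).mono hsub)
  have hir : IntervalIntegrable (fun ζ => (s - ζ) ^ (q - 1) * (Λ * ‖z ζ - x ζ‖))
      MeasureTheory.volume 0 s :=
    hker.mul_continuousOn ((continuousOn_const.mul (hz.sub hxc).norm).mono hsub)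
  have hdiff : z s - x s = (Real.Gamma q)⁻¹ • ∫ ζ in (0:ℝ)..s,
      (((s - ζ) ^ (q - 1)) • (f ζ (z ζ) + g ζ (z ζ) (υ ζ) + h ζ) -
        ((s - ζ) ^ (q - 1)) • (f ζ (x ζ) + g ζ (x ζ) (u ζ))) := by
    rw [intervalIntegral.integral_sub hiz hix, smul_sub, hzeq s hs, hxeq s hs, hz0]
    abel
  have hnorm : ‖∫ ζ in (0:ℝ)..s,
      (((s - ζ) ^ (q - 1)) • (f ζ (z ζ) + g ζ (z ζ) (υ ζ) + h ζ) -
        ((s - ζ) ^ (q - 1)) • (f ζ (x ζ) + g ζ (x ζ) (u ζ)))‖ ≤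
      ∫ ζ in (0:ℝ)..s, ((s - ζ) ^ (q - 1) * (Λ * ‖z ζ - x ζ‖) + (s - ζ) ^ (q - 1) * ε) := by
    refine intervalIntegral.norm_integral_le_of_norm_le hs.1
      (Filter.Eventually.of_forall fun ζ hζ => ?_) (hir.add (hker.mul_const ε))
    have hζT : ζ ∈ Icc (0:ℝ) T := ⟨hζ.1.le, hζ.2.trans hs.2⟩
    have h0 : 0 ≤ (s - ζ) ^ (q - 1) := Real.rpow_nonneg (sub_nonneg.2 hζ.2) _
    rw [← smul_sub, norm_smul, Real.norm_of_nonneg h0, ← mul_add]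
    refine mul_le_mul_of_nonneg_left ?_ h0
    have e1 := hfLip ζ hζT (x ζ) (z ζ)
    have e2 := hgLip ζ hζT (x ζ) (z ζ) (u ζ) (υ ζ)
    have e3 := mul_le_mul_of_nonneg_left (hdu ζ hζT) hlg.le
    calc ‖f ζ (z ζ) + g ζ (z ζ) (υ ζ) + h ζ - (f ζ (x ζ) + g ζ (x ζ) (u ζ))‖
        = ‖(f ζ (z ζ) - f ζ (x ζ)) + (g ζ (z ζ) (υ ζ) - g ζ (x ζ) (u ζ)) + h ζ‖ := by
          congr 1
          abel
      _ ≤ ‖f ζ (z ζ) - f ζ (x ζ)‖ + ‖g ζ (z ζ) (υ ζ) - g ζ (x ζ) (u ζ)‖ + ‖h ζ‖ :=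
          norm_add₃_le
      _ ≤ Λ * ‖z ζ - x ζ‖ + ε := by
          rw [hΛe]
          linarith [hh ζ hζT]
  have hkint : (Real.Gamma q)⁻¹ * ∫ ζ in (0:ℝ)..s, (s - ζ) ^ (q - 1)
      = s ^ q / Real.Gamma (q + 1) := by
    have e := integral_kernel_pow hq0 hs.1 0
    simp only [pow_zero, mul_one] at e
    rw [e]
    simp
    field_simp
  rw [intervalIntegral.integral_add hir (hker.mul_const ε),
    intervalIntegral.integral_mul_const] at hnorm
  have hsT : s ^ q / Real.Gamma (q + 1) * ε ≤ T ^ q / Real.Gamma (q + 1) * ε := by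
    have : 0 < Real.Gamma (q + 1) := Real.Gamma_pos_of_pos (by linarith)
    have := Real.rpow_le_rpow hs.1 hs.2 hq0.le
    gcongr
  have hfin := mul_le_mul_of_nonneg_left hnorm (inv_nonneg.2 hGq.le)
  rw [mul_add, ← mul_assoc _ _ ε, hkint] at hfin
  calc ‖z s - x s‖ = (Real.Gamma q)⁻¹ * ‖_‖ := by
        rw [hdiff, norm_smul, Real.norm_of_nonneg (inv_nonneg.2 hGq.le)]
    _ ≤ _ := hfin
    _ ≤ _ := by linarith
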